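/- arXiv:2007.12111 — 2 statements merged into one kernel-verified Lean document; each statement's English description precedes it below -/
import Mathlib

section
/- For every integer r ≥ 2 and every ε > 0 there exist a real γ = γ(r,ε) > 0, an integer K = K(r,ε), and an integer N such that the following holds. Let p ∈ (0,1], let G be a (γ,p)-pseudorandom graph on n ≥ N vertices, and let an r-colouring of the edges of G be given. Then there exist a colour i ∈ {1,…,r} and a path in G of length at least (2/(r+1) − ε)·n all but at most K of whose edges have colour i. -/
/-- The number of edges of `G` with one endpoint in `U` and the other in `W`
(for disjoint `U`, `W`, each such edge corresponds to exactly one ordered pair). -/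
noncomputable def edgesBetween {V : Type*} (G : SimpleGraph V) (U W : Set V) : ℕ :=
  {q : V × V | q.1 ∈ U ∧ q.2 ∈ W ∧ G.Adj q.1 q.2}.ncard

/-- A graph `G` on vertex set `V` is `(γ,p)`-pseudorandom if for every pair of
disjoint sets `U, W ⊆ V` with `|U|,|W| ≥ γ|V|` the density `d(U,W)` satisfies
`|d(U,W) − p| ≤ γp`. -/
def IsPseudorandom {V : Type*} [Fintype V] (G : SimpleGraph V) (γ p : ℝ) : Prop :=
  ∀ U W : Set V, Disjoint U W →
    γ * (Fintype.card V : ℝ) ≤ (U.ncard : ℝ) → γ * (Fintype.card V : ℝ) ≤ (W.ncard : ℝ) →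
    |(edgesBetween G U W : ℝ) / ((U.ncard : ℝ) * (W.ncard : ℝ)) - p| ≤ γ * p


def ParL {V : Type*} (A B : Finset V) : List V → Prop
  | [] => True
  | h :: tl => (tl.length % 2 = 0 → h ∈ A) ∧ (tl.length % 2 = 1 → h ∈ B) ∧ ParL A B tl

section dfs
open Classical

lemma parL_sub {V : Type*} (A B : Finset V) (P : List V) (h : ParL A B P) :
    ∀ x ∈ P, x ∈ A ∪ B := by
  induction P with
  | nil => simp
  | cons a tl ih =>
    obtain ⟨h1, h2, h3⟩ := h
    intro x hx
    rcases List.mem_cons.1 hx with rfl | hx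
    · rcases Nat.mod_two_eq_zero_or_one tl.length with h | h
      · exact Finset.mem_union_left _ (h1 h)
      · exact Finset.mem_union_right _ (h2 h)
    · exact ih h3 x hx

lemma parL_count {V : Type*} (A B : Finset V) (hAB : Disjoint A B) (P : List V)
    (h : ParL A B P) (hn : P.Nodup) :
    (P.toFinset ∩ A).card = (P.length + 1) / 2 ∧ (P.toFinset ∩ B).card = P.length / 2 := by
  induction P with
  | nil => simp
  | cons a tl ih =>
    obtain ⟨h1, h2, h3⟩ := h
    rw [List.nodup_cons] at hn
    obtain ⟨i1, i2⟩ := ih h3 hn.2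
    have hd := Finset.disjoint_left.1 hAB
    rw [List.toFinset_cons]
    rcases Nat.mod_two_eq_zero_or_one tl.length with h | h
    · have ha := h1 h
      rw [Finset.insert_inter_of_mem ha, Finset.insert_inter_of_notMem (hd ha),
        Finset.card_insert_of_notMem (by simp [hn.1]), i1, i2, List.length_cons]
      omega
    · have hb := h2 h
      have ha : a ∉ A := fun ha => hd ha hb
      rw [Finset.insert_inter_of_mem hb, Finset.insert_inter_of_notMem ha,
        Finset.card_insert_of_notMem (by simp [hn.1]), i1, i2, List.length_cons]
      omega

lemma dfs_path {V : Type*} (H : V → V → Prop) (hH : ∀ x y, H x y → H y x)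
    (A B : Finset V) (hAB : Disjoint A B) (s t q : ℕ)
    (full : ∀ X ⊆ A, ∀ Y ⊆ B, s ≤ X.card → t ≤ Y.card → ∃ x ∈ X, ∃ y ∈ Y, H x y)
    (hs : 1 ≤ s) (ht : 1 ≤ t) (hA : q + 2 * s ≤ A.card) (hB : q + 2 * t ≤ B.card) :
    ∃ P : List V, P.IsChain H ∧ P.Nodup ∧ P.length = 2 * q ∧ (∀ x ∈ P, x ∈ A ∪ B) ∧
      (P.toFinset ∩ A).card = q ∧ (P.toFinset ∩ B).card = q := by
  have hd := Finset.disjoint_left.1 hAB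
  suffices key : ∀ (m : ℕ) (P : List V) (F : Finset V),
      2 * (A.card + B.card) ≤ m + 2 * F.card + P.length →
      P.IsChain H → ParL A B P → P.Nodup → P.length ≤ 2 * q →
      F ⊆ A ∪ B → (∀ x ∈ P, x ∉ F) →
      (∀ f ∈ F, ∀ u, u ∉ F → u ∉ P → (f ∈ A → u ∈ B → ¬ H f u) ∧ (f ∈ B → u ∈ A → ¬ H f u)) →
      (F ∩ A).card < s → (F ∩ B).card < t →
      ∃ P : List V, P.IsChain H ∧ P.Nodup ∧ P.length = 2 * q ∧ ParL A B P by
    obtain ⟨P, h1, h2, h3, h4⟩ := key (2 * (A.card + B.card)) [] ∅ (by simp) (by simp) (by simp [ParL])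
      (by simp) (by simp) (by simp) (by simp) (by simp) (by simp; omega) (by simp; omega)
    obtain ⟨c1, c2⟩ := parL_count A B hAB P h4 h2
    exact ⟨P, h1, h2, h3, parL_sub A B P h4, by omega, by omega⟩
  intro m
  induction m with
  | zero =>
    intro P F hm hc hp hn hl hF hPF hE hFA hFB
    exfalso
    have h1 : F.card ≤ (F ∩ A).card + (F ∩ B).card := by
      calc F.card = ((F ∩ A) ∪ (F ∩ B)).card := by
            rw [← Finset.inter_union_distrib_left, Finset.inter_eq_left.2 hF]
        _ ≤ _ := Finset.card_union_le _ _
    have h2 : (F ∪ P.toFinset).card ≤ (A ∪ B).card := by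
      apply Finset.card_le_card
      intro x hx
      rcases Finset.mem_union.1 hx with h | h
      · exact hF h
      · exact parL_sub A B P hp x (by simpa using h)
    rw [Finset.card_union_of_disjoint hAB, Finset.card_union_of_disjoint (by
      rw [Finset.disjoint_left]; intro x hx hx'; exact hPF x (by simpa using hx') hx),
      List.toFinset_card_of_nodup hn] at h2
    omega
  | succ m ih =>
    intro P F hm hc hp hn hl hF hPF hE hFA hFB
    by_cases hq : P.length = 2 * q
    · exact ⟨P, hc, hn, hq, hp⟩
    match P, hc, hp, hn, hl, hPF, hE, hm, hq with
    | [], hc, hp, hn, hl, hPF, hE, hm, hq =>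
      obtain ⟨u, hu, huF⟩ : ∃ u ∈ A, u ∉ F := by
        by_contra hcon
        push Not at hcon
        have : A ⊆ F ∩ A := fun x hx => Finset.mem_inter.2 ⟨hcon x hx, hx⟩
        have := Finset.card_le_card this
        omega
      refine ih [u] F (by simp at hm ⊢; omega) (by simp) (by simp [ParL, hu]) (by simp)
        (by simp at hq ⊢; omega) hF (by simpa using huF) ?_ hFA hFB
      intro f hf v hv hv'
      exact hE f hf v hv (by simp)
    | h :: tl, hc, hp, hn, hl, hPF, hE, hm, hq =>
      obtain ⟨p1, p2, p3⟩ := id hp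
      have hcnt := parL_count A B hAB _ hp hn
      have hhF : h ∉ F := hPF h (by simp)
      have hn' := List.nodup_cons.1 hn
      have hhAB : h ∈ A ∪ B := parL_sub A B _ hp h (by simp)
      simp only [List.length_cons] at hm hq hl hcnt
      by_cases hpush : ∃ u, u ∉ F ∧ u ∉ h :: tl ∧ H h u ∧ (h ∈ A → u ∈ B) ∧ (h ∈ B → u ∈ A)
      · obtain ⟨u, hu1, hu2, hu3, hu4, hu5⟩ := hpush
        refine ih (u :: h :: tl) F (by simp; omega) ?_ ?_ ?_ (by simp; omega) hF ?_ ?_ hFA hFB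
        · rw [List.isChain_cons_cons]; exact ⟨hH _ _ hu3, hc⟩
        · refine ⟨?_, ?_, hp⟩
          · intro hh; simp only [List.length_cons] at hh; exact hu5 (p2 (by omega))
          · intro hh; simp only [List.length_cons] at hh; exact hu4 (p1 (by omega))
        · exact List.nodup_cons.2 ⟨hu2, hn⟩
        · intro x hx
          rcases List.mem_cons.1 hx with rfl | hx
          · exact hu1
          · exact hPF x hx
        · intro f hf v hv hv'
          exact hE f hf v hv (fun hh => hv' (List.mem_cons_of_mem _ hh))
      · push Not at hpush
        have hE' : ∀ f ∈ insert h F, ∀ u, u ∉ insert h F → u ∉ tl →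
            (f ∈ A → u ∈ B → ¬ H f u) ∧ (f ∈ B → u ∈ A → ¬ H f u) := by
          intro f hf u hu hu'
          rw [Finset.mem_insert, not_or] at hu
          have hu'' : u ∉ h :: tl := by simp [hu.1, hu']
          rcases Finset.mem_insert.1 hf with rfl | hf
          · constructor
            · intro ha hb hab
              obtain ⟨h1, h2⟩ := hpush u hu.2 hu'' hab (fun _ => hb)
              exact hd ha h1
            · intro ha hb hab
              obtain ⟨h1, h2⟩ := hpush u hu.2 hu'' hab (fun h => absurd ha (hd h))
              exact h2 hb
          · exact hE f hf u hu.2 hu''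
        have hcF : (insert h F).card = F.card + 1 := Finset.card_insert_of_notMem hhF
        have hsplit : ∀ C : Finset V, C.card ≤
            (C.filter (fun u => u ∉ insert h F ∧ u ∉ tl)).card + (insert h F ∩ C).card +
              (tl.toFinset ∩ C).card := by
          intro C
          calc C.card ≤ ((C.filter (fun u => u ∉ insert h F ∧ u ∉ tl)) ∪ (insert h F ∩ C) ∪
              (tl.toFinset ∩ C)).card := by
                apply Finset.card_le_card
                intro x hx
                by_cases h1 : x ∈ insert h F
                · simp only [Finset.mem_union, Finset.mem_inter]; tauto
                · by_cases h2 : x ∈ tl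
                  · simp only [Finset.mem_union, Finset.mem_inter, List.mem_toFinset]; tauto
                  · simp only [Finset.mem_union, Finset.mem_filter]; tauto
            _ ≤ _ := by
              refine (Finset.card_union_le _ _).trans ?_
              gcongr
              exact Finset.card_union_le _ _
        have hcnt' := parL_count A B hAB _ p3 hn'.2
        have hnew : (insert h F ∩ A).card < s ∧ (insert h F ∩ B).card < t := by
          rcases Finset.mem_union.1 hhAB with ha | hb
          · have e2 : insert h F ∩ B = F ∩ B := Finset.insert_inter_of_notMem (hd ha)
            rw [e2]
            refine ⟨?_, hFB⟩
            by_contra hcon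
            have := hsplit B
            rw [e2] at this
            obtain ⟨x, hx, y, hy, hxy⟩ := full (insert h F ∩ A) Finset.inter_subset_right
              (B.filter (fun u => u ∉ insert h F ∧ u ∉ tl)) (Finset.filter_subset _ _)
              (by omega) (by omega)
            rw [Finset.mem_filter] at hy
            rw [Finset.mem_inter] at hx
            exact (hE' x hx.1 y hy.2.1 hy.2.2).1 hx.2 hy.1 hxy
          · have ha : h ∉ A := fun h' => hd h' hb
            have e2 : insert h F ∩ A = F ∩ A := Finset.insert_inter_of_notMem ha
            rw [e2]
            refine ⟨hFA, ?_⟩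
            by_contra hcon
            have := hsplit A
            rw [e2] at this
            obtain ⟨x, hx, y, hy, hxy⟩ := full 
              (A.filter (fun u => u ∉ insert h F ∧ u ∉ tl)) (Finset.filter_subset _ _)
              (insert h F ∩ B) Finset.inter_subset_right
              (by omega) (by omega)
            rw [Finset.mem_filter] at hx
            rw [Finset.mem_inter] at hy
            exact (hE' y hy.1 x hx.2.1 hx.2.2).2 hy.2 hx.1 (hH _ _ hxy)
        refine ih tl (insert h F) (by omega) hc.tail p3 hn'.2 (by omega) ?_ ?_ hE' hnew.1 hnew.2
        · exact Finset.insert_subset hhAB hF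
        · intro x hx hx'
          rcases Finset.mem_insert.1 hx' with rfl | hx'
          · exact hn'.1 hx
          · exact hPF x (List.mem_cons_of_mem _ hx) hx'

end dfs
section asm
open Classical

lemma paths_system {V ι : Type*} (H : V → V → Prop) (hH : ∀ x y, H x y → H y x)
    (q : ι × ι → ℕ) (s : ι → ℕ) (hs : ∀ a, 1 ≤ s a) (ps : List (ι × ι)) :
    ∀ (A B : ι → Finset V), (∀ a b, a ≠ b → Disjoint (A a) (A b)) →
    (∀ a b, a ≠ b → Disjoint (B a) (B b)) → (∀ a b, Disjoint (A a) (B b)) →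
    (∀ p ∈ ps, ∀ X ⊆ A p.1, ∀ Y ⊆ B p.2, s p.1 ≤ X.card → s p.2 ≤ Y.card →
      ∃ x ∈ X, ∃ y ∈ Y, H x y) →
    (∀ p ∈ ps, ((ps.filter (fun p' => p'.1 = p.1)).map q).sum + 2 * s p.1 ≤ (A p.1).card) →
    (∀ p ∈ ps, ((ps.filter (fun p' => p'.2 = p.2)).map q).sum + 2 * s p.2 ≤ (B p.2).card) →
    ∃ Ps : List (List V), Ps.length = ps.length ∧ (∀ P ∈ Ps, P.IsChain H) ∧ Ps.flatten.Nodup ∧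
      Ps.flatten.length = 2 * (ps.map q).sum ∧
      ∀ x ∈ Ps.flatten, ∃ a, x ∈ A a ∨ x ∈ B a := by
  induction ps with
  | nil => intro A B _ _ _ _ _ _; exact ⟨[], by simp⟩
  | cons p ps ih =>
    intro A B hAA hBB hAB hfull hA hB
    have hA1 := hA p (by simp)
    have hB1 := hB p (by simp)
    simp only [decide_true, List.filter_cons_of_pos, List.map_cons, List.sum_cons] at hA1 hB1
    obtain ⟨P, c1, c2, c3, c4, c5, c6⟩ := dfs_path H hH (A p.1) (B p.2) (hAB _ _) (s p.1) (s p.2) (q p)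
      (hfull p (by simp)) (hs _) (hs _) (by omega) (by omega)
    have hPA : ∀ a, a ≠ p.1 → ((A a) \ P.toFinset) = A a := by
      intro a ha
      rw [Finset.sdiff_eq_self_iff_disjoint, Finset.disjoint_left]
      intro x hx hx'
      rcases Finset.mem_union.1 (c4 x (by simpa using hx')) with h | h
      · exact Finset.disjoint_left.1 (hAA _ _ ha) hx h
      · exact Finset.disjoint_left.1 (hAB _ _) hx h
    have hPB : ∀ a, a ≠ p.2 → ((B a) \ P.toFinset) = B a := by
      intro a ha
      rw [Finset.sdiff_eq_self_iff_disjoint, Finset.disjoint_left]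
      intro x hx hx'
      rcases Finset.mem_union.1 (c4 x (by simpa using hx')) with h | h
      · exact Finset.disjoint_left.1 (hAB _ _) h hx
      · exact Finset.disjoint_left.1 (hBB _ _ ha) hx h
    have cA : (A p.1 \ P.toFinset).card + q p = (A p.1).card := by
      rw [← c5, Finset.inter_comm, Finset.card_sdiff_add_card_inter]
    have cB : (B p.2 \ P.toFinset).card + q p = (B p.2).card := by
      rw [← c6, Finset.inter_comm, Finset.card_sdiff_add_card_inter]
    obtain ⟨Ps, d1, d2, d3, d4, d5⟩ := ih (fun a => A a \ P.toFinset) (fun a => B a \ P.toFinset)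
      (fun a b hab => (hAA a b hab).mono Finset.sdiff_subset Finset.sdiff_subset)
      (fun a b hab => (hBB a b hab).mono Finset.sdiff_subset Finset.sdiff_subset)
      (fun a b => (hAB a b).mono Finset.sdiff_subset Finset.sdiff_subset)
      (fun p' hp' X hX Y hY => hfull p' (List.mem_cons_of_mem _ hp') X (hX.trans Finset.sdiff_subset)
        Y (hY.trans Finset.sdiff_subset))
      (by
        intro p' hp'
        have := hA p' (List.mem_cons_of_mem _ hp')
        by_cases h : p'.1 = p.1
        · simp only [h, decide_true, List.filter_cons_of_pos, List.map_cons, List.sum_cons] at this ⊢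
          omega
        · rw [List.filter_cons_of_neg (by simpa using fun h' => h h'.symm)] at this
          simp only [hPA _ h]
          exact this)
      (by
        intro p' hp'
        have := hB p' (List.mem_cons_of_mem _ hp')
        by_cases h : p'.2 = p.2
        · simp only [h, decide_true, List.filter_cons_of_pos, List.map_cons, List.sum_cons] at this ⊢
          omega
        · rw [List.filter_cons_of_neg (by simpa using fun h' => h h'.symm)] at this
          simp only [hPB _ h]
          exact this)
    refine ⟨P :: Ps, by simp [d1], ?_, ?_, ?_, ?_⟩
    · intro Q hQ
      rcases List.mem_cons.1 hQ with rfl | hQ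
      · exact c1
      · exact d2 Q hQ
    · rw [List.flatten_cons, List.nodup_append]
      refine ⟨c2, d3, ?_⟩
      rintro x hx y hy rfl
      obtain ⟨a, h | h⟩ := d5 x hy
      · exact (Finset.mem_sdiff.1 h).2 (by simpa using hx)
      · exact (Finset.mem_sdiff.1 h).2 (by simpa using hx)
    · rw [List.flatten_cons, List.length_append, c3, d4, List.map_cons, List.sum_cons]; ring
    · intro x hx
      rw [List.flatten_cons, List.mem_append] at hx
      rcases hx with hx | hx
      · rcases Finset.mem_union.1 (c4 x hx) with h | h
        · exact ⟨_, Or.inl h⟩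
        · exact ⟨_, Or.inr h⟩
      · obtain ⟨a, h | h⟩ := d5 x hx
        · exact ⟨a, Or.inl (Finset.mem_sdiff.1 h).1⟩
        · exact ⟨a, Or.inr (Finset.mem_sdiff.1 h).1⟩

noncomputable def badC {V : Type*} (H : V → V → Prop) : List V → ℕ
  | [] => 0
  | [_] => 0
  | x :: y :: l => (if H x y then 0 else 1) + badC H (y :: l)

lemma badC_cons_le {V : Type*} (H : V → V → Prop) (x : V) (l : List V) :
    badC H l ≤ badC H (x :: l) := by
  cases l with
  | nil => simp [badC]
  | cons y l => simp [badC]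

lemma badC_suffix {V : Type*} (H : V → V → Prop) (l₁ l₂ : List V) :
    badC H l₂ ≤ badC H (l₁ ++ l₂) := by
  induction l₁ with
  | nil => simp
  | cons x l ih => exact ih.trans (badC_cons_le H x _)

lemma badC_chain {V : Type*} (H : V → V → Prop) (l : List V) (h : l.IsChain H) :
    badC H l = 0 := by
  induction l with
  | nil => simp [badC]
  | cons x l ih =>
    cases l with
    | nil => simp [badC]
    | cons y l =>
      rw [List.isChain_cons_cons] at h
      simp [badC, h.1, ih h.2]

lemma badC_append {V : Type*} (H : V → V → Prop) (l₁ l₂ : List V) (h : l₁.IsChain H) :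
    badC H (l₁ ++ l₂) ≤ badC H l₂ + 1 := by
  induction l₁ with
  | nil => simp
  | cons x l ih =>
    cases l with
    | nil =>
      cases l₂ with
      | nil => simp [badC]
      | cons y l => 
        simp only [badC, List.cons_append, List.nil_append]
        split_ifs <;> omega
    | cons y l =>
      rw [List.isChain_cons_cons] at h
      have := ih h.2
      simpa [badC, h.1] using this

lemma join_paths {V : Type*} (G H : V → V → Prop) (hHG : ∀ x y, H x y → G x y) (g : ℕ)
    (hg : ∀ X Y : Finset V, Disjoint X Y → g ≤ X.card → g ≤ Y.card → ∃ x ∈ X, ∃ y ∈ Y, G x y)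
    (Ps : List (List V)) (hc : ∀ P ∈ Ps, P.IsChain H) (hn : Ps.flatten.Nodup) :
    ∃ Q : List V, Q.IsChain G ∧ Q.Nodup ∧ (∀ x ∈ Q, x ∈ Ps.flatten) ∧ badC H Q ≤ Ps.length ∧
      Ps.flatten.length ≤ Q.length + 2 * g * Ps.length := by
  induction Ps with
  | nil => exact ⟨[], by simp [badC]⟩
  | cons P Ps ih =>
    rw [List.flatten_cons, List.nodup_append] at hn
    obtain ⟨n1, n2, n3⟩ := hn
    have hcP := hc P (by simp)
    obtain ⟨Q, c1, c2, c3, c4, c5⟩ := ih (fun P' h => hc P' (List.mem_cons_of_mem _ h)) n2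
    simp only [List.flatten_cons, List.length_append, List.length_cons, List.mem_append]
    by_cases h1 : P.length < g
    · exact ⟨Q, c1, c2, fun x hx => Or.inr (c3 x hx), by omega, by rw [mul_add]; omega⟩
    by_cases h2 : Q.length < g
    · exact ⟨P, hcP.imp hHG, n1, fun x hx => Or.inl hx, by rw [badC_chain H P hcP]; omega,
        by rw [mul_add]; omega⟩
    obtain ⟨x, hx, y, hy, hxy⟩ := hg (P.drop (P.length - g)).toFinset (Q.take g).toFinset
      (by
        rw [Finset.disjoint_left]
        intro x hx hx'
        rw [List.mem_toFinset] at hx hx'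
        exact n3 x (List.mem_of_mem_drop hx) x (c3 x (List.mem_of_mem_take hx')) rfl)
      (by
        rw [List.toFinset_card_of_nodup (n1.sublist (List.drop_sublist _ _)), List.length_drop]
        omega)
      (by
        rw [List.toFinset_card_of_nodup (c2.sublist (List.take_sublist _ _)), List.length_take]
        omega)
    rw [List.mem_toFinset] at hx hy
    obtain ⟨l1, l2, e1⟩ := List.append_of_mem hx
    obtain ⟨l3, l4, e2⟩ := List.append_of_mem hy
    have eP : P = (P.take (P.length - g) ++ l1 ++ [x]) ++ l2 := by
      conv_lhs => rw [← List.take_append_drop (P.length - g) P, e1]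
      simp
    have eQ : Q = l3 ++ (y :: (l4 ++ Q.drop g)) := by
      conv_lhs => rw [← List.take_append_drop g Q, e2]
      simp
    have len1 := congrArg List.length e1
    have len2 := congrArg List.length e2
    rw [List.length_drop, List.length_append, List.length_cons] at len1
    rw [List.length_take, List.length_append, List.length_cons] at len2
    generalize hP1 : P.take (P.length - g) ++ l1 = P1 at eP
    generalize hQ1 : l4 ++ Q.drop g = Q1 at eQ
    have cP1 : (P1 ++ [x]).IsChain H := by
      rw [eP] at hcP; exact (List.isChain_append.1 hcP).1
    have cQ1 : (y :: Q1).IsChain G := by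
      rw [eQ] at c1; exact (List.isChain_append.1 c1).2.1
    refine ⟨(P1 ++ [x]) ++ (y :: Q1), ?_, ?_, ?_, ?_, ?_⟩
    · rw [List.isChain_append]
      refine ⟨cP1.imp hHG, cQ1, ?_⟩
      intro a ha b hb
      simp at ha hb
      subst ha; subst hb; exact hxy
    · rw [List.nodup_append]
      refine ⟨?_, ?_, ?_⟩
      · rw [eP] at n1; exact (List.nodup_append.1 n1).1
      · rw [eQ] at c2; exact (List.nodup_append.1 c2).2.1
      · intro a ha b hb
        exact n3 a (by rw [eP]; exact List.mem_append_left _ ha) b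
          (c3 b (by rw [eQ]; exact List.mem_append_right _ hb))
    · intro a ha
      rcases List.mem_append.1 ha with ha | ha
      · left; rw [eP]; exact List.mem_append_left _ ha
      · right; exact c3 a (by rw [eQ]; exact List.mem_append_right _ ha)
    · have a1 := badC_append H (P1 ++ [x]) (y :: Q1) cP1
      have a2 := badC_suffix H l3 (y :: Q1)
      rw [← eQ] at a2
      omega
    · have lP := congrArg List.length eP
      have lQ := congrArg List.length eQ
      rw [List.length_append] at lP lQ ⊢
      rw [mul_add]
      omega

lemma list_to_walk {V : Type*} (G : SimpleGraph V) (H : V → V → Prop) (Bd : Sym2 V → Bool)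
    (hB : ∀ x y, G.Adj x y → (Bd s(x, y) = true → ¬ H x y)) (l : List V) :
    ∀ x, (x :: l).IsChain G.Adj → ∃ v, ∃ w : G.Walk x v, w.support = x :: l ∧
      (w.edges.filter Bd).length ≤ badC H (x :: l) := by
  induction l with
  | nil => intro x _; exact ⟨x, SimpleGraph.Walk.nil, by simp⟩
  | cons y l ih =>
    intro x hx
    rw [List.isChain_cons_cons] at hx
    obtain ⟨v, w, h1, h2⟩ := ih y hx.2
    refine ⟨v, SimpleGraph.Walk.cons hx.1 w, by simp [h1], ?_⟩
    rw [SimpleGraph.Walk.edges_cons, List.filter_cons, badC]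
    have := hB x y hx.1
    by_cases hb : Bd s(x, y) = true
    · rw [if_pos hb, if_neg (this hb), List.length_cons]; omega
    · rw [if_neg hb]; omega
end asm
section part
open Classical

lemma hall_def {V : Type} [Fintype V] (R : V → V → Prop) (M : ℕ) (hM : M ≤ Fintype.card V) :
    (∃ (S : Finset V) (f : V → V), M ≤ S.card ∧ Set.InjOn f S ∧ ∀ u ∈ S, R u (f u)) ∨
    ∃ X : Finset V, Fintype.card V + (Finset.univ.filter (fun v => ∃ u ∈ X, R u v)).card
      < M + X.card := by
  let t : V → Finset (V ⊕ Fin (Fintype.card V - M)) := fun u =>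
    (Finset.univ.filter (fun v => R u v)).disjSum Finset.univ
  by_cases h : ∀ s : Finset V, s.card ≤ (s.biUnion t).card
  · left
    obtain ⟨f, hf, hft⟩ := (Finset.all_card_le_biUnion_card_iff_exists_injective t).1 h
    refine ⟨Finset.univ.filter (fun u => (f u).isLeft), fun u => (f u).elim id (fun _ => u), ?_, ?_, ?_⟩
    · have h1 := Finset.card_filter_add_card_filter_not (s := (Finset.univ : Finset V))
        (fun u => (f u).isLeft = true)
      have h2 : (Finset.univ.filter (fun u => ¬ (f u).isLeft = true)).card ≤ Fintype.card V - M := by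
        calc _ = ((Finset.univ.filter (fun u => ¬ (f u).isLeft = true)).image f).card :=
              (Finset.card_image_of_injective _ hf).symm
          _ ≤ (Finset.univ.image (Sum.inr : Fin (Fintype.card V - M) → V ⊕ _)).card := by
              apply Finset.card_le_card
              intro y hy
              obtain ⟨u, hu, rfl⟩ := Finset.mem_image.1 hy
              rw [Finset.mem_filter] at hu
              rcases hfu : f u with a | b
              · simp [hfu] at hu
              · simp
          _ ≤ _ := by
              refine Finset.card_image_le.trans (by simp)
      rw [Finset.card_univ] at h1
      omega
    · intro u hu v hv huv
      simp only [Finset.coe_filter, Finset.mem_univ, true_and, Set.mem_ofPred_eq] at hu hv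
      rcases hfu : f u with a | b
      · rcases hfv : f v with a' | b'
        · simp [hfu, hfv] at huv
          apply hf; rw [hfu, hfv, huv]
        · simp [hfv] at hv
      · simp [hfu] at hu
    · intro u hu
      have := hft u
      rcases hfu : f u with a | b
      · rw [hfu] at this
        simpa [t, hfu] using this
      · simp [hfu] at hu
  · right
    push Not at h
    obtain ⟨X, hX⟩ := h
    refine ⟨X, ?_⟩
    have hne : X.Nonempty := by
      rw [Finset.nonempty_iff_ne_empty]; rintro rfl; simp at hX
    have : X.biUnion t = (Finset.univ.filter (fun v => ∃ u ∈ X, R u v)).disjSum Finset.univ := by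
      ext y
      rcases y with a | b
      · simp [t]
      · obtain ⟨x, hx⟩ := hne
        simpa [t] using ⟨x, hx⟩
    rw [this, Finset.card_disjSum, Finset.card_univ, Fintype.card_fin] at hX
    omega

def cls {V : Type} [Fintype V] {k : ℕ} (c : V → Fin k) (a : Fin k) : Finset V :=
  Finset.univ.filter (fun v => c v = a)

def Emp {V : Type} {k : ℕ} (H : V → V → Prop) (c : V → Fin k) (a b : Fin k) : Prop :=
  ∀ x y, c x = a → c y = b → ¬ H x y

def Full {V : Type} [Fintype V] {k : ℕ} (H : V → V → Prop) (D : ℕ) (c : V → Fin k) (a b : Fin k) : Prop :=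
  ∀ X ⊆ cls c a, ∀ Y ⊆ cls c b, (cls c a).card ≤ D * X.card → (cls c b).card ≤ D * Y.card →
    ∃ x ∈ X, ∃ y ∈ Y, H x y

lemma refine_step {V : Type} [Fintype V] {r k : ℕ} (D : ℕ) (H : Fin r → V → V → Prop)
    (c : V → Fin k) :
    ∃ c' : V → Fin (Fintype.card (Fin k × (Fin r × Fin k × Fin k → Bool × Bool))),
      (Finset.univ.filter (fun z : Fin r × V × V =>
        ¬ Emp (H z.1) c (c z.2.1) (c z.2.2) ∧ ¬ Full (H z.1) D c (c z.2.1) (c z.2.2))).card +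
      D ^ 2 * (Finset.univ.filter (fun z : Fin r × V × V =>
        Emp (H z.1) c (c z.2.1) (c z.2.2))).card ≤
      D ^ 2 * (Finset.univ.filter (fun z : Fin r × V × V =>
        Emp (H z.1) c' (c' z.2.1) (c' z.2.2))).card := by
  have hch : ∀ j : Fin r × Fin k × Fin k, ∃ XY : Finset V × Finset V,
      ¬ Full (H j.1) D c j.2.1 j.2.2 → XY.1 ⊆ cls c j.2.1 ∧ XY.2 ⊆ cls c j.2.2 ∧
        (cls c j.2.1).card ≤ D * XY.1.card ∧ (cls c j.2.2).card ≤ D * XY.2.card ∧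
        ∀ x ∈ XY.1, ∀ y ∈ XY.2, ¬ H j.1 x y := by
    intro j
    by_cases hj : Full (H j.1) D c j.2.1 j.2.2
    · exact ⟨(∅, ∅), fun h => absurd hj h⟩
    · have hj' := hj
      unfold Full at hj'
      push Not at hj'
      obtain ⟨X, hX, Y, hY, h1, h2, h3⟩ := hj'
      exact ⟨(X, Y), fun _ => ⟨hX, hY, h1, h2, h3⟩⟩
  choose XY hXY using hch
  let lab : V → Fin k × (Fin r × Fin k × Fin k → Bool × Bool) := fun v =>
    (c v, fun j => (decide (v ∈ (XY j).1), decide (v ∈ (XY j).2)))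
  let e := Fintype.equivFin (Fin k × (Fin r × Fin k × Fin k → Bool × Bool))
  have hlab : ∀ u v, e (lab u) = e (lab v) → c u = c v ∧
      ∀ j, (u ∈ (XY j).1 ↔ v ∈ (XY j).1) ∧ (u ∈ (XY j).2 ↔ v ∈ (XY j).2) := by
    intro u v h
    have h := e.injective h
    have h1 := congrArg Prod.fst h
    have h2 := congrArg Prod.snd h
    refine ⟨h1, fun j => ?_⟩
    have := congrFun h2 j
    simpa [lab] using this
  refine ⟨fun v => e (lab v), ?_⟩
  set T := (Finset.univ.filter (fun z : Fin r × V × V =>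
        ¬ Emp (H z.1) c (c z.2.1) (c z.2.2) ∧ ¬ Full (H z.1) D c (c z.2.1) (c z.2.2))) with hT
  set W := (Finset.univ.filter (fun z : Fin r × V × V =>
        (¬ Emp (H z.1) c (c z.2.1) (c z.2.2) ∧ ¬ Full (H z.1) D c (c z.2.1) (c z.2.2)) ∧
        z.2.1 ∈ (XY (z.1, c z.2.1, c z.2.2)).1 ∧ z.2.2 ∈ (XY (z.1, c z.2.1, c z.2.2)).2)) with hW
  set E := (Finset.univ.filter (fun z : Fin r × V × V => Emp (H z.1) c (c z.2.1) (c z.2.2))) with hE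
  have key : T.card ≤ D ^ 2 * W.card := by
    let φ : Fin r × V × V → Fin r × Fin k × Fin k := fun z => (z.1, c z.2.1, c z.2.2)
    rw [Finset.card_eq_sum_card_fiberwise (f := φ) (t := Finset.univ) (by simp),
      Finset.card_eq_sum_card_fiberwise (s := W) (f := φ) (t := Finset.univ) (by simp),
      Finset.mul_sum]
    apply Finset.sum_le_sum
    rintro ⟨i, a, b⟩ -
    by_cases hb : ¬ Emp (H i) c a b ∧ ¬ Full (H i) D c a b
    · obtain ⟨g1, g2, g3, g4, g5⟩ := hXY (i, a, b) hb.2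
      have h1 : (T.filter (fun z => φ z = (i, a, b))) ⊆ ({i} : Finset (Fin r)) ×ˢ (cls c a ×ˢ cls c b) := by
        rintro ⟨j, u, v⟩ hz
        simp only [Finset.mem_filter, φ, Prod.mk.injEq] at hz
        simp [cls, hz.2.1, hz.2.2.1, hz.2.2.2]
      have h2 : ({i} : Finset (Fin r)) ×ˢ ((XY (i, a, b)).1 ×ˢ (XY (i, a, b)).2) ⊆
          (W.filter (fun z => φ z = (i, a, b))) := by
        rintro ⟨j, u, v⟩ hz
        simp only [Finset.mem_product, Finset.mem_singleton] at hz
        obtain ⟨rfl, hu, hv⟩ := hz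
        have cu : c u = a := by simpa [cls] using g1 hu
        have cv : c v = b := by simpa [cls] using g2 hv
        simp only [Finset.mem_filter, φ, hW, cu, cv, Finset.mem_univ, true_and]
        exact ⟨⟨hb, hu, hv⟩, trivial⟩
      have h1 := Finset.card_le_card h1
      have h2 := Finset.card_le_card h2
      rw [Finset.card_product, Finset.card_product, Finset.card_singleton, one_mul] at h1 h2
      calc _ ≤ _ := h1
        _ ≤ (D * (XY (i, a, b)).1.card) * (D * (XY (i, a, b)).2.card) := Nat.mul_le_mul g3 g4
        _ = D ^ 2 * ((XY (i, a, b)).1.card * (XY (i, a, b)).2.card) := by ring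
        _ ≤ _ := Nat.mul_le_mul_left _ h2
    · have : T.filter (fun z => φ z = (i, a, b)) = ∅ := by
        rw [Finset.filter_eq_empty_iff]
        rintro ⟨j, u, v⟩ hz hh
        simp only [φ, Prod.mk.injEq] at hh
        obtain ⟨rfl, rfl, rfl⟩ := hh
        simp only [hT, Finset.mem_filter] at hz
        exact hb hz.2
      rw [this]; simp
  have hsub : E ∪ W ⊆ (Finset.univ.filter (fun z : Fin r × V × V =>
        Emp (H z.1) (fun v => e (lab v)) (e (lab z.2.1)) (e (lab z.2.2)))) := by
    rintro ⟨i, u, v⟩ hz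
    simp only [Finset.mem_filter, Finset.mem_univ, true_and]
    intro x y hx hy
    obtain ⟨x1, x2⟩ := hlab _ _ hx
    obtain ⟨y1, y2⟩ := hlab _ _ hy
    rcases Finset.mem_union.1 hz with hz | hz
    · simp only [hE, Finset.mem_filter, Finset.mem_univ, true_and] at hz
      exact hz x y x1 y1
    · simp only [hW, Finset.mem_filter, Finset.mem_univ, true_and] at hz
      obtain ⟨hz1, hz2, hz3⟩ := hz
      exact (hXY (i, c u, c v) hz1.2).2.2.2.2 x ((x2 _).1.2 hz2) y ((y2 _).2.2 hz3)
  have hdis : Disjoint E W := by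
    rw [Finset.disjoint_left]
    intro z h1 h2
    rw [hE, Finset.mem_filter] at h1
    rw [hW, Finset.mem_filter] at h2
    exact h2.2.1.1 h1.2
  have := Finset.card_le_card hsub
  rw [Finset.card_union_of_disjoint hdis] at this
  calc _ ≤ D ^ 2 * W.card + D ^ 2 * E.card := by omega
    _ = D ^ 2 * (E.card + W.card) := by ring
    _ ≤ _ := Nat.mul_le_mul_left _ this

lemma partition_lemma (r D : ℕ) (hD : 1 ≤ D) (η : ℝ) (hη : 0 < η) :
    ∃ K : ℕ, ∀ (V : Type) [Fintype V] (H : Fin r → V → V → Prop),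
      ∃ k ≤ K, ∃ c : V → Fin k,
      ((Finset.univ.filter (fun z : Fin r × V × V =>
        ¬ Emp (H z.1) c (c z.2.1) (c z.2.2) ∧ ¬ Full (H z.1) D c (c z.2.1) (c z.2.2))).card : ℝ)
        ≤ η * (Fintype.card V : ℝ) ^ 2 := by
  have step : ∀ t : ℕ, ∃ K : ℕ, ∀ (V : Type) [Fintype V] (H : Fin r → V → V → Prop),
      ∃ k ≤ K, ∃ c : V → Fin k,
      ((Finset.univ.filter (fun z : Fin r × V × V =>
        ¬ Emp (H z.1) c (c z.2.1) (c z.2.2) ∧ ¬ Full (H z.1) D c (c z.2.1) (c z.2.2))).card : ℝ)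
        ≤ η * (Fintype.card V : ℝ) ^ 2 ∨
      t * η * (Fintype.card V : ℝ) ^ 2 ≤ D ^ 2 * ((Finset.univ.filter (fun z : Fin r × V × V =>
        Emp (H z.1) c (c z.2.1) (c z.2.2))).card : ℝ) := by
    intro t
    induction t with
    | zero =>
      refine ⟨1, fun V _ H => ⟨1, le_rfl, fun _ => 0, Or.inr ?_⟩⟩
      simp only [Nat.cast_zero, zero_mul]
      positivity
    | succ t ih =>
      obtain ⟨K, hK⟩ := ih
      refine ⟨max K (K * 4 ^ (r * (K * K))), fun V _ H => ?_⟩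
      obtain ⟨k, hk, c, hc | hc⟩ := hK V H
      · exact ⟨k, hk.trans (le_max_left _ _), c, Or.inl hc⟩
      by_cases hb : ((Finset.univ.filter (fun z : Fin r × V × V =>
        ¬ Emp (H z.1) c (c z.2.1) (c z.2.2) ∧ ¬ Full (H z.1) D c (c z.2.1) (c z.2.2))).card : ℝ)
        ≤ η * (Fintype.card V : ℝ) ^ 2
      · exact ⟨k, hk.trans (le_max_left _ _), c, Or.inl hb⟩
      obtain ⟨c', hc'⟩ := refine_step D H c
      refine ⟨_, le_trans ?_ (le_max_right _ _), c', Or.inr ?_⟩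
      · simp only [Fintype.card_prod, Fintype.card_fin, Fintype.card_fun, Fintype.card_bool]
        gcongr
        norm_num
      · have hc'' : ((_ : ℕ) : ℝ) ≤ ((_ : ℕ) : ℝ) := Nat.cast_le.2 hc'
        push_cast at hc'' ⊢
        push Not at hb
        linarith
  obtain ⟨t, ht⟩ := exists_nat_gt ((D : ℝ) ^ 2 * r / η)
  obtain ⟨K, hK⟩ := step t
  refine ⟨K, fun V _ H => ?_⟩
  obtain ⟨k, hk, c, hc | hc⟩ := hK V H
  · exact ⟨k, hk, c, hc⟩
  · refine ⟨k, hk, c, ?_⟩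
    have h1 : ((Finset.univ.filter (fun z : Fin r × V × V =>
        Emp (H z.1) c (c z.2.1) (c z.2.2))).card : ℝ) ≤ r * (Fintype.card V : ℝ) ^ 2 := by
      have := Finset.card_le_univ (Finset.univ.filter (fun z : Fin r × V × V =>
        Emp (H z.1) c (c z.2.1) (c z.2.2)))
      rw [Fintype.card_prod, Fintype.card_prod, Fintype.card_fin] at this
      have h2 : ((_ : ℕ) : ℝ) ≤ ((_ : ℕ) : ℝ) := Nat.cast_le.2 this
      push_cast at h2
      rw [sq]; exact h2
    rw [div_lt_iff₀ hη] at ht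
    have h3 : (D : ℝ) ^ 2 * ((Finset.univ.filter (fun z : Fin r × V × V =>
        Emp (H z.1) c (c z.2.1) (c z.2.2))).card : ℝ) ≤ D ^ 2 * (r * (Fintype.card V : ℝ) ^ 2) :=
      mul_le_mul_of_nonneg_left h1 (by positivity)
    have h4 : (Fintype.card V : ℝ) ^ 2 ≤ 0 := by
      by_contra hcon
      push Not at hcon
      nlinarith
    have h5 : Fintype.card V = 0 := by
      have : (Fintype.card V : ℝ) = 0 := by nlinarith [sq_nonneg (Fintype.card V : ℝ)]
      exact_mod_cast this
    have : IsEmpty V := Fintype.card_eq_zero_iff.1 h5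
    simp
end part
section fin
open Classical

lemma count_lemma {V : Type} [Fintype V] (r M : ℕ) (hr : 1 ≤ r) (R : Fin r → V → V → Prop)
    (W : Fin r → V → ℕ) (hW : ∀ i, ∑ v, W i v ≤ M)
    (hR : ∀ i u v, R i u v → 2 ≤ W i u + W i v) (σ : ℝ) (hσ : 0 < σ)
    (hbad : ((Finset.univ.filter (fun z : V × V => ∀ i, ¬ R i z.1 z.2)).card : ℝ) ≤
      σ ^ 2 * (Fintype.card V : ℝ) ^ 2) :
    2 * (Fintype.card V : ℝ) ≤ (r + 1) * M + 2 * σ * Fintype.card V := by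
  set n := Fintype.card V with hn
  rcases Nat.eq_zero_or_pos n with h0 | hpos
  · rw [h0]; simp only [Nat.cast_zero, mul_zero, add_zero]; positivity
  have hnR : (0 : ℝ) < n := by exact_mod_cast hpos
  have gen : ∀ (B : Finset V) (F : V → ℕ) (T : ℕ), (B.card : ℝ) ≤ σ * n →
      (∀ v, v ∉ B → 2 ≤ F v) → ∑ v, F v ≤ T → 2 * (n : ℝ) ≤ T + 2 * σ * n := by
    intro B F T hB hF hT
    have h1 : ∑ v ∈ Bᶜ, 2 ≤ ∑ v, F v :=
      (Finset.sum_le_sum (fun v hv => hF v (Finset.mem_compl.1 hv))).trans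
        (Finset.sum_le_sum_of_subset (Finset.subset_univ _))
    rw [Finset.sum_const, smul_eq_mul, Finset.card_compl, ← hn] at h1
    have h2 : 2 * n ≤ T + 2 * B.card := by omega
    have h3 : ((_ : ℕ) : ℝ) ≤ ((_ : ℕ) : ℝ) := Nat.cast_le.2 h2
    push_cast at h3
    linarith
  have hsum : ∑ v, ∑ i, W i v ≤ r * M := by
    rw [Finset.sum_comm]
    refine (Finset.sum_le_sum (fun i _ => hW i)).trans (by simp)
  set Bs := Finset.univ.filter (fun u : V =>
    σ * n < ((Finset.univ.filter (fun v => ∀ i, ¬ R i u v)).card : ℝ)) with hBs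
  have hBc : (Bs.card : ℝ) ≤ σ * n := by
    have h1 : ((Finset.univ.filter (fun z : V × V => ∀ i, ¬ R i z.1 z.2)).card : ℝ)
        = ∑ u, ((Finset.univ.filter (fun v => ∀ i, ¬ R i u v)).card : ℝ) := by
      rw [← Nat.cast_sum]
      congr 1
      rw [Finset.card_filter, Fintype.sum_prod_type]
      refine Finset.sum_congr rfl (fun u _ => ?_)
      rw [Finset.card_filter]
    have h2 : ∑ u ∈ Bs, (σ * n) ≤ ∑ u, ((Finset.univ.filter (fun v => ∀ i, ¬ R i u v)).card : ℝ) := by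
      refine (Finset.sum_le_sum (fun u hu => ?_)).trans
        (Finset.sum_le_sum_of_subset_of_nonneg (Finset.subset_univ _) (fun _ _ _ => by positivity))
      exact (Finset.mem_filter.1 hu).2.le
    rw [Finset.sum_const, nsmul_eq_mul, ← h1] at h2
    have h3 := h2.trans hbad
    have h4 : 0 < σ * n := by positivity
    by_contra hcon
    push Not at hcon
    nlinarith
  by_cases hcase : ∃ u, u ∉ Bs ∧ ∑ i, W i u ≤ 1
  · obtain ⟨u, hu, hu1⟩ := hcase
    obtain ⟨i0, hi0⟩ : ∃ i0 : Fin r, ∀ j, j ≠ i0 → W j u = 0 := by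
      by_cases hz : ∀ j, W j u = 0
      · exact ⟨⟨0, hr⟩, fun j _ => hz j⟩
      · push Not at hz
        obtain ⟨i0, hi0⟩ := hz
        refine ⟨i0, fun j hj => ?_⟩
        have : ∑ i ∈ {i0, j}, W i u ≤ ∑ i, W i u := Finset.sum_le_sum_of_subset (Finset.subset_univ _)
        rw [Finset.sum_pair hj.symm] at this
        omega
    have hi1 : W i0 u ≤ 1 := (Finset.single_le_sum (f := fun i => W i u) (fun _ _ => Nat.zero_le _)
      (Finset.mem_univ i0)).trans hu1
    have := gen (Finset.univ.filter (fun v => ∀ i, ¬ R i u v)) (fun v => ∑ i, W i v + W i0 v)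
      (r * M + M) (by
        by_contra hcon
        push Not at hcon
        exact hu (Finset.mem_filter.2 ⟨Finset.mem_univ _, hcon⟩))
      (by
        intro v hv
        simp only [Finset.mem_filter, Finset.mem_univ, true_and] at hv
        push Not at hv
        obtain ⟨i, hi⟩ := hv
        have h1 := hR i u v hi
        have h2 : W i v ≤ ∑ i, W i v :=
          Finset.single_le_sum (f := fun i => W i v) (fun _ _ => Nat.zero_le _) (Finset.mem_univ i)
        by_cases hii : i = i0
        · subst hii; omega
        · have := hi0 i hii; omega)
      (by
        rw [Finset.sum_add_distrib]
        exact add_le_add hsum (hW i0))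
    push_cast at this
    linarith
  · push Not at hcase
    have := gen Bs (fun v => ∑ i, W i v) (r * M) hBc (fun v hv => hcase v hv) hsum
    push_cast at this
    have : (0 : ℝ) ≤ M := by positivity
    linarith

lemma nongood_count {V : Type} [Fintype V] {r k : ℕ} (D g : ℕ) (G : V → V → Prop)
    (H : Fin r → V → V → Prop) (hG : ∀ x y, G x y → ∃ i, H i x y)
    (hg : ∀ X Y : Finset V, Disjoint X Y → g ≤ X.card → g ≤ Y.card → ∃ x ∈ X, ∃ y ∈ Y, G x y)
    (c : V → Fin k) :
    (Finset.univ.filter (fun z : V × V => ∀ i, ¬ Full (H i) D c (c z.1) (c z.2))).card ≤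
    (Finset.univ.filter (fun z : Fin r × V × V =>
        ¬ Emp (H z.1) c (c z.2.1) (c z.2.2) ∧ ¬ Full (H z.1) D c (c z.2.1) (c z.2.2))).card +
      2 * (k * (2 * g) * Fintype.card V) := by
  set S := Finset.univ.filter (fun u : V => (cls c (c u)).card < 2 * g) with hS
  have hSc : S.card ≤ k * (2 * g) := by
    have : S ⊆ (Finset.univ.filter (fun a : Fin k => (cls c a).card < 2 * g)).biUnion (cls c) := by
      intro u hu
      rw [Finset.mem_biUnion]
      exact ⟨c u, by simpa [hS] using hu, by simp [cls]⟩
    refine (Finset.card_le_card this).trans ?_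
    refine (Finset.card_biUnion_le_card_mul _ _ (2 * g) ?_).trans ?_
    · intro a ha; exact (Finset.mem_filter.1 ha).2.le
    · gcongr
      exact (Finset.card_le_univ _).trans (by simp)
  set T := (Finset.univ.filter (fun z : Fin r × V × V =>
        ¬ Emp (H z.1) c (c z.2.1) (c z.2.2) ∧ ¬ Full (H z.1) D c (c z.2.1) (c z.2.2))) with hT
  have hsub : (Finset.univ.filter (fun z : V × V => ∀ i, ¬ Full (H i) D c (c z.1) (c z.2))) ⊆
      T.image Prod.snd ∪ (S ×ˢ Finset.univ ∪ Finset.univ ×ˢ S) := by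
    rintro ⟨u, v⟩ hz
    simp only [Finset.mem_filter, Finset.mem_univ, true_and] at hz
    by_cases hE : ∀ i, Emp (H i) c (c u) (c v)
    · rw [Finset.mem_union, Finset.mem_union]
      right
      by_contra hcon
      simp only [Finset.mem_product, Finset.mem_univ, and_true, true_and, hS, Finset.mem_filter,
        not_or, not_lt] at hcon
      obtain ⟨X, hX, hXc⟩ := Finset.exists_subset_card_eq (show g ≤ (cls c (c u)).card by omega)
      have hY : g ≤ (cls c (c v) \ X).card := by
        have := Finset.le_card_sdiff X (cls c (c v))
        omega
      obtain ⟨x, hx, y, hy, hxy⟩ := hg X (cls c (c v) \ X) Finset.disjoint_sdiff hXc.ge hY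
      obtain ⟨i, hi⟩ := hG x y hxy
      refine hE i x y ?_ ?_ hi
      · simpa [cls] using hX hx
      · simpa [cls] using (Finset.mem_sdiff.1 hy).1
    · push Not at hE
      obtain ⟨i, hi⟩ := hE
      apply Finset.mem_union_left
      rw [Finset.mem_image]
      exact ⟨(i, u, v), by simp [hT, hi, hz i], rfl⟩
  refine (Finset.card_le_card hsub).trans ?_
  refine (Finset.card_union_le _ _).trans ?_
  refine add_le_add Finset.card_image_le ?_
  refine (Finset.card_union_le _ _).trans ?_
  rw [Finset.card_product, Finset.card_product, Finset.card_univ]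
  nlinarith [Nat.mul_le_mul_right (Fintype.card V) hSc]

lemma Full.symm {V : Type} [Fintype V] {k : ℕ} {H : V → V → Prop} (hH : ∀ x y, H x y → H y x)
    {D : ℕ} {c : V → Fin k} {a b : Fin k} (h : Full H D c a b) : Full H D c b a := by
  intro X hX Y hY h1 h2
  obtain ⟨y, hy, x, hx, hxy⟩ := h Y hY X hX h2 h1
  exact ⟨x, hx, y, hy, hH _ _ hxy⟩

lemma q_bound {ι : Type} (F : Finset ι) (x : ι → ℕ) (D v : ℕ) (hD : 4 ≤ D)
    (hx : ∑ p ∈ F, x p ≤ v) (p0 : ι) (hp0 : p0 ∈ F)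
    (hq : 0 < ⌊(x p0 : ℝ) * (1 / 2 - 2 / D)⌋₊ - 4) :
    ∑ p ∈ F, (⌊(x p : ℝ) * (1 / 2 - 2 / D)⌋₊ - 4) + 2 * (v / D + 1) ≤ v / 2 := by
  have hDR : (4 : ℝ) ≤ D := by exact_mod_cast hD
  have hδ : (0 : ℝ) ≤ 1 / 2 - 2 / D := by
    rw [sub_nonneg, div_le_div_iff₀ (by linarith) (by norm_num)]; linarith
  have h1 : ∑ p ∈ F, (⌊(x p : ℝ) * (1 / 2 - 2 / D)⌋₊ - 4) + 4 ≤
      ∑ p ∈ F, ⌊(x p : ℝ) * (1 / 2 - 2 / D)⌋₊ := by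
    rw [← Finset.add_sum_erase _ _ hp0, ← Finset.add_sum_erase _ (fun p => ⌊(x p : ℝ) * (1 / 2 - 2 / D)⌋₊) hp0]
    have : ∑ p ∈ F.erase p0, (⌊(x p : ℝ) * (1 / 2 - 2 / D)⌋₊ - 4) ≤
      ∑ p ∈ F.erase p0, ⌊(x p : ℝ) * (1 / 2 - 2 / D)⌋₊ :=
      Finset.sum_le_sum (fun p _ => Nat.sub_le _ _)
    omega
  have h2 : ((∑ p ∈ F, ⌊(x p : ℝ) * (1 / 2 - 2 / D)⌋₊ : ℕ) : ℝ) ≤ v * (1 / 2 - 2 / D) := by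
    push_cast
    calc _ ≤ ∑ p ∈ F, (x p : ℝ) * (1 / 2 - 2 / D) :=
          Finset.sum_le_sum (fun p _ => Nat.floor_le (by positivity))
      _ = ((∑ p ∈ F, x p : ℕ) : ℝ) * (1 / 2 - 2 / D) := by rw [← Finset.sum_mul]; push_cast; rfl
      _ ≤ _ := mul_le_mul_of_nonneg_right (by exact_mod_cast hx) hδ
  have h3 : ((v / D : ℕ) : ℝ) ≤ v / D := Nat.cast_div_le
  have h4 : (v : ℝ) ≤ 2 * ((v / 2 : ℕ) : ℝ) + 1 := by
    have : v ≤ 2 * (v / 2) + 1 := by omega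
    exact_mod_cast this
  have h5 : (v : ℝ) * (1 / 2 - 2 / D) = v / 2 - 2 * (v / D) := by ring
  have h6 : ((∑ p ∈ F, (⌊(x p : ℝ) * (1 / 2 - 2 / D)⌋₊ - 4) + 4 : ℕ) : ℝ) ≤ _ := Nat.cast_le.2 h1
  have h7 : ((∑ p ∈ F, (⌊(x p : ℝ) * (1 / 2 - 2 / D)⌋₊ - 4) + 2 * (v / D + 1) : ℕ) : ℝ) ≤ ((v / 2 : ℕ) : ℝ) := by
    rw [Nat.cast_add] at h6 ⊢
    push_cast [-Nat.cast_sum] at h6 ⊢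
    linarith
  exact_mod_cast h7

lemma colour_path {V : Type} [Fintype V] {k : ℕ} (D g : ℕ) (hD : 4 ≤ D) (G H : V → V → Prop)
    (hH : ∀ x y, H x y → H y x) (hHG : ∀ x y, H x y → G x y)
    (hg : ∀ X Y : Finset V, Disjoint X Y → g ≤ X.card → g ≤ Y.card → ∃ x ∈ X, ∃ y ∈ Y, G x y)
    (c : V → Fin k) (S : Finset V) (f : V → V) (hf : Set.InjOn f S)
    (hS : ∀ u ∈ S, Full H D c (c u) (c (f u))) :
    ∃ Q : List V, Q.IsChain G ∧ Q.Nodup ∧ badC H Q ≤ k * k ∧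
      (S.card : ℝ) * (1 - 4 / D) - 10 * (k * k) - 2 * g * (k * k) ≤ Q.length := by
  let x : Fin k × Fin k → ℕ := fun p => (S.filter (fun u => (c u, c (f u)) = p)).card
  let q : Fin k × Fin k → ℕ := fun p => ⌊(x p : ℝ) * (1 / 2 - 2 / D)⌋₊ - 4
  let s : Fin k → ℕ := fun a => (cls c a).card / D + 1
  let P0 : Finset (Fin k × Fin k) := Finset.univ.filter (fun p => 0 < q p)
  have hhalf : ∀ a, ∃ A ⊆ cls c a, A.card = (cls c a).card / 2 := fun a =>
    Finset.exists_subset_card_eq (Nat.div_le_self _ _)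
  choose A hA hAc using hhalf
  have hcd : ∀ a b, a ≠ b → Disjoint (cls c a) (cls c b) := by
    intro a b hab
    rw [Finset.disjoint_left]
    intro u hu hv
    simp only [cls, Finset.mem_filter] at hu hv
    exact hab (hu.2.symm.trans hv.2)
  have hBc : ∀ a, (cls c a).card / 2 ≤ (cls c a \ A a).card := by
    intro a
    rw [Finset.card_sdiff_of_subset (hA a), hAc]; omega
  have hDpos : 0 < D := by omega
  have hscard : ∀ (a : Fin k) (m : ℕ), s a ≤ m → (cls c a).card ≤ D * m := by
    intro a m hm
    have h1 : (cls c a).card < D * ((cls c a).card / D + 1) := Nat.lt_mul_div_succ _ hDpos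
    exact h1.le.trans (Nat.mul_le_mul_left _ hm)
  have hsum : ∀ (Fp : Fin k × Fin k → Prop), ∑ p ∈ Finset.univ.filter Fp, x p
      = (S.filter (fun u => Fp (c u, c (f u)))).card := by
    intro Fp
    rw [Finset.card_eq_sum_card_fiberwise (f := fun u => (c u, c (f u))) (t := Finset.univ.filter Fp)]
    · refine Finset.sum_congr rfl (fun p hp => ?_)
      simp only [x]
      congr 1
      ext u
      simp only [Finset.mem_filter, Finset.mem_univ, true_and] at hp ⊢
      constructor
      · rintro ⟨h1, h2⟩; exact ⟨⟨h1, by rw [h2]; exact hp⟩, h2⟩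
      · rintro ⟨h1, h2⟩; exact ⟨h1.1, h2⟩
    · intro u hu
      simp only [Finset.coe_filter, Set.mem_ofPred_eq, Finset.mem_univ, true_and] at hu ⊢
      exact hu.2
  have hlist : ∀ (Fp : Fin k × Fin k → Prop), ((P0.toList.filter (fun p => Fp p)).map q).sum
      ≤ ∑ p ∈ Finset.univ.filter Fp, q p := by
    intro Fp
    rw [← List.sum_toFinset _ ((Finset.nodup_toList P0).filter _)]
    apply Finset.sum_le_sum_of_subset
    intro p hp
    rw [List.mem_toFinset, List.mem_filter] at hp
    simpa using hp.2
  have hq0 : ∀ p ∈ P0.toList, 0 < q p := by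
    intro p hp
    rw [Finset.mem_toList] at hp
    exact (Finset.mem_filter.1 hp).2
  obtain ⟨Ps, d1, d2, d3, d4, d5⟩ := paths_system H hH q s (fun a => Nat.le_add_left _ _) P0.toList
    A (fun a => cls c a \ A a)
    (fun a b hab => (hcd a b hab).mono (hA a) (hA b))
    (fun a b hab => (hcd a b hab).mono Finset.sdiff_subset Finset.sdiff_subset)
    (fun a b => by
      by_cases hab : a = b
      · subst hab; exact Finset.disjoint_sdiff
      · exact (hcd a b hab).mono (hA a) Finset.sdiff_subset)
    (by
      intro p hp X hX Y hY h1 h2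
      have hx : 0 < x p := by
        rcases Nat.eq_zero_or_pos (x p) with h | h
        · have := hq0 p hp
          simp [q, h] at this
        · exact h
      obtain ⟨u, hu⟩ := Finset.card_pos.1 hx
      rw [Finset.mem_filter] at hu
      have hfu := hS u hu.1
      rw [← hu.2] at hX hY h1 h2
      exact hfu X (hX.trans (hA _)) Y (hY.trans Finset.sdiff_subset) (hscard _ _ h1) (hscard _ _ h2))
    (by
      intro p hp
      rw [hAc]
      refine le_trans (Nat.add_le_add_right (hlist (fun p' => p'.1 = p.1)) _) ?_
      refine q_bound _ x D _ hD ?_ p (by simp) (hq0 p hp)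
      rw [hsum]
      apply Finset.card_le_card
      intro u hu
      simp only [Finset.mem_filter] at hu
      simpa [cls] using hu.2)
    (by
      intro p hp
      refine le_trans ?_ (hBc _)
      refine le_trans (Nat.add_le_add_right (hlist (fun p' => p'.2 = p.2)) _) ?_
      refine q_bound _ x D _ hD ?_ p (by simp) (hq0 p hp)
      rw [hsum]
      apply Finset.card_le_card_of_injOn f
      · intro u hu
        simp only [Finset.coe_filter, Set.mem_ofPred_eq] at hu
        simpa [cls] using hu.2
      · intro u hu v hv huv
        simp only [Finset.coe_filter, Set.mem_ofPred_eq] at hu hv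
        exact hf hu.1 hv.1 huv)
  obtain ⟨Q, e1, e2, e3, e4, e5⟩ := join_paths G H hHG g hg Ps d2 d3
  have hlen : Ps.length ≤ k * k := by
    rw [d1, Finset.length_toList]
    exact (Finset.card_le_univ _).trans (by simp)
  refine ⟨Q, e1, e2, e4.trans hlen, ?_⟩
  have hqs : (P0.toList.map q).sum = ∑ p, q p := by
    rw [Finset.sum_map_toList]
    apply Finset.sum_subset (Finset.subset_univ _)
    intro p _ hp
    by_contra h
    exact hp (Finset.mem_filter.2 ⟨Finset.mem_univ _, Nat.pos_of_ne_zero h⟩)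
  have hql : ∀ p, (x p : ℝ) * (1 / 2 - 2 / D) - 5 ≤ q p := by
    intro p
    have h1 := Nat.lt_floor_add_one ((x p : ℝ) * (1 / 2 - 2 / D))
    have h2 : ⌊(x p : ℝ) * (1 / 2 - 2 / D)⌋₊ ≤ q p + 4 := by simp only [q]; omega
    have h3 : ((_ : ℕ) : ℝ) ≤ ((_ : ℕ) : ℝ) := Nat.cast_le.2 h2
    push_cast at h3
    linarith
  have hxs : ∑ p, x p = S.card := by
    have := hsum (fun _ => True)
    simpa using this
  have htot : (S.card : ℝ) * (1 / 2 - 2 / D) - 5 * (k * k) ≤ ∑ p, (q p : ℝ) := by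
    refine le_trans (le_of_eq ?_) (Finset.sum_le_sum (fun p _ => hql p))
    rw [Finset.sum_sub_distrib, ← Finset.sum_mul, ← hxs]
    simp
    ring
  have e6 : 2 * ∑ p, q p ≤ Q.length + 2 * g * (k * k) := by
    rw [d4, hqs] at e5
    exact e5.trans (Nat.add_le_add_left (Nat.mul_le_mul_left _ hlen) _)
  have e7 : ((_ : ℕ) : ℝ) ≤ ((_ : ℕ) : ℝ) := Nat.cast_le.2 e6
  push_cast at e7
  have : (S.card : ℝ) * (1 - 4 / D) = 2 * ((S.card : ℝ) * (1 / 2 - 2 / D)) := by ring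
  rw [this]
  linarith
end fin

section mainaux
open Classical

lemma pr_edge {n : ℕ} (G : SimpleGraph (Fin n)) (γ p : ℝ) (hp : 0 < p) (hγ : γ ≤ 1 / 2)
    (hG : IsPseudorandom G γ p) (X Y : Finset (Fin n)) (hXY : Disjoint X Y)
    (hX : ⌈γ * n⌉₊ ≤ X.card) (hY : ⌈γ * n⌉₊ ≤ Y.card) : ∃ x ∈ X, ∃ y ∈ Y, G.Adj x y := by
  by_contra hcon
  push Not at hcon
  have h := hG (X : Set (Fin n)) (Y : Set (Fin n)) (by exact_mod_cast hXY)
    (by rw [Set.ncard_coe_finset, Fintype.card_fin]; exact Nat.ceil_le.1 hX)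
    (by rw [Set.ncard_coe_finset, Fintype.card_fin]; exact Nat.ceil_le.1 hY)
  have h0 : edgesBetween G (X : Set (Fin n)) (Y : Set (Fin n)) = 0 := by
    unfold edgesBetween
    have : {q : Fin n × Fin n | q.1 ∈ (X : Set (Fin n)) ∧ q.2 ∈ (Y : Set (Fin n)) ∧ G.Adj q.1 q.2} = ∅ := by
      rw [Set.eq_empty_iff_forall_notMem]
      rintro ⟨a, b⟩ ⟨h1, h2, h3⟩
      exact hcon a h1 b h2 h3
    rw [this, Set.ncard_empty]
  rw [h0, Nat.cast_zero, zero_div, zero_sub, abs_neg, abs_of_pos hp] at h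
  nlinarith

lemma choose_colour {V : Type} [Fintype V] {r : ℕ} (hr : 1 ≤ r) (R : Fin r → V → V → Prop)
    (hRs : ∀ i u v, R i u v → R i v u) (M : ℕ) (hM : M ≤ Fintype.card V) (σ : ℝ) (hσ : 0 < σ)
    (hbad : ((Finset.univ.filter (fun z : V × V => ∀ i, ¬ R i z.1 z.2)).card : ℝ) ≤
      σ ^ 2 * (Fintype.card V : ℝ) ^ 2)
    (hlt : (r + 1) * (M : ℝ) + 2 * σ * Fintype.card V < 2 * (Fintype.card V : ℝ)) :
    ∃ i, ∃ (S : Finset V) (f : V → V), M ≤ S.card ∧ Set.InjOn f S ∧ ∀ u ∈ S, R i u (f u) := by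
  by_contra hcon
  push Not at hcon
  have hX : ∀ i, ∃ X : Finset V, Fintype.card V +
      (Finset.univ.filter (fun v => ∃ u ∈ X, R i u v)).card < M + X.card := by
    intro i
    rcases hall_def (R i) M hM with ⟨S, f, h1, h2, h3⟩ | h
    · obtain ⟨u, hu, hu'⟩ := hcon i S f h1 h2
      exact absurd (h3 u hu) hu'
    · exact h
  choose X hX using hX
  have := count_lemma r M hr R
    (fun i v => (if v ∈ X i then 0 else 1) + (if ∃ u ∈ X i, R i u v then 1 else 0))
    (by
      intro i
      have h := hX i
      rw [Finset.sum_add_distrib]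
      have e1 : ∑ v, (if v ∈ X i then 0 else 1) = Fintype.card V - (X i).card := by
        have hcomp : (X i)ᶜ = Finset.univ.filter (fun v => v ∉ X i) := by ext; simp
        rw [← Finset.card_compl, hcomp, Finset.card_filter]
        refine Finset.sum_congr rfl (fun v _ => ?_)
        by_cases hv : v ∈ X i <;> simp [hv]
      have e2 : ∑ v, (if ∃ u ∈ X i, R i u v then 1 else 0) =
          (Finset.univ.filter (fun v => ∃ u ∈ X i, R i u v)).card := by
        rw [Finset.card_filter]
      rw [e1, e2]
      have := Finset.card_le_univ (X i)
      omega)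
    (by
      intro i u v huv
      have hvu := hRs i u v huv
      by_cases hu : u ∈ X i
      · have h1 : ∃ u ∈ X i, R i u v := ⟨u, hu, huv⟩
        by_cases hv : v ∈ X i
        · have h2 : ∃ v ∈ X i, R i v u := ⟨v, hv, hvu⟩
          simp only [if_pos hu, if_pos hv, if_pos h1, if_pos h2]; omega
        · simp only [if_pos hu, if_neg hv, if_pos h1]; omega
      · by_cases hv : v ∈ X i
        · have h2 : ∃ v ∈ X i, R i v u := ⟨v, hv, hvu⟩
          simp only [if_neg hu, if_pos hv, if_pos h2]; omega
        · simp only [if_neg hu, if_neg hv]; omega)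
    σ hσ hbad
  linarith
end mainaux

set_option maxHeartbeats 1000000 in
/-- **Theorem (long almost monochromatic paths in pseudorandom graphs).**
For every `r ≥ 2` and `ε > 0` there are `γ > 0`, `K` and `N` such that: for every
`p ∈ (0,1]`, every `(γ,p)`-pseudorandom graph `G` on `n ≥ N` vertices and every
`r`-colouring of the edges of `G`, there are a colour `i` and a path of length at
least `(2/(r+1) − ε)·n` all but at most `K` of whose edges have colour `i`. -/
theorem long_almost_monochromatic_path_pseudorandom
    (r : ℕ) (hr : 2 ≤ r) (ε : ℝ) (hε : 0 < ε) :
    ∃ γ : ℝ, 0 < γ ∧ ∃ K N : ℕ,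
      ∀ (p : ℝ), 0 < p → p ≤ 1 →
      ∀ (n : ℕ), N ≤ n →
      ∀ (G : SimpleGraph (Fin n)), IsPseudorandom G γ p →
      ∀ c : Sym2 (Fin n) → Fin r, ∃ i : Fin r,
        ∃ (u v : Fin n) (w : G.Walk u v), w.IsPath ∧
          (2 / (r + 1 : ℝ) - ε) * n ≤ (w.length : ℝ) ∧
          (w.edges.filter (fun e => c e ≠ i)).length ≤ K := by
  obtain ⟨D, hD⟩ := exists_nat_gt (max 4 (32 / ε))
  have hD4 : (4 : ℝ) < D := (le_max_left _ _).trans_lt hD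
  have hDε : 32 / ε < D := (le_max_right _ _).trans_lt hD
  have hD4' : 4 ≤ D := by exact_mod_cast hD4.le
  have hDε' : 4 / (D : ℝ) ≤ ε / 8 := by
    rw [div_lt_iff₀ hε] at hDε
    rw [div_le_div_iff₀ (by linarith) (by norm_num)]
    nlinarith
  obtain ⟨K, hK⟩ := partition_lemma r D (by omega) ((ε / 4) ^ 2 / 2) (by positivity)
  have hK0 : (0 : ℝ) ≤ K := Nat.cast_nonneg K
  obtain ⟨γ, hγ0, hγ1, hγ2, hγ3⟩ : ∃ γ : ℝ, 0 < γ ∧ γ ≤ 1 / 2 ∧ 4 * K * γ ≤ (ε / 4) ^ 2 / 4 ∧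
      2 * (K * K) * γ ≤ ε / 8 := by
    refine ⟨min (1 / 2) (min ((ε / 4) ^ 2 / 4 / (4 * (K + 1))) (ε / 8 / (2 * ((K + 1) * (K + 1))))),
      by positivity, min_le_left _ _, ?_, ?_⟩
    · calc _ ≤ 4 * ((K : ℝ) + 1) * ((ε / 4) ^ 2 / 4 / (4 * (K + 1))) := by
            apply mul_le_mul (by linarith) ((min_le_right _ _).trans (min_le_left _ _)) (by positivity)
              (by positivity)
        _ = _ := by field_simp
    · calc _ ≤ 2 * (((K : ℝ) + 1) * (K + 1)) * (ε / 8 / (2 * ((K + 1) * (K + 1)))) := by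
            apply mul_le_mul (by nlinarith) ((min_le_right _ _).trans (min_le_right _ _)) (by positivity)
              (by positivity)
        _ = _ := by field_simp
  obtain ⟨N, hN⟩ := exists_nat_gt (max 1 (max (4 * K / ((ε / 4) ^ 2 / 4)) ((12 * (K * K) + 2) / (ε / 8))))
  refine ⟨γ, hγ0, K * K, N, ?_⟩
  intro p hp0 hp1 n hn G hG col
  have hnN : (N : ℝ) ≤ n := by exact_mod_cast hn
  have hn1 : (1 : ℝ) < n := ((le_max_left _ _).trans_lt hN).trans_le hnN
  have hn2 : 4 * (K : ℝ) ≤ (ε / 4) ^ 2 / 4 * n := by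
    have : 4 * (K : ℝ) / ((ε / 4) ^ 2 / 4) < n :=
      (((le_max_left _ _).trans (le_max_right _ _)).trans_lt hN).trans_le hnN
    rw [div_lt_iff₀ (by positivity)] at this
    linarith
  have hn3 : (12 * ((K : ℝ) * K) + 2) ≤ ε / 8 * n := by
    have : (12 * ((K : ℝ) * K) + 2) / (ε / 8) < n :=
      (((le_max_right _ _).trans (le_max_right _ _)).trans_lt hN).trans_le hnN
    rw [div_lt_iff₀ (by positivity)] at this
    linarith
  have hnpos : 0 < n := by
    have : (0 : ℝ) < n := by linarith
    exact_mod_cast this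
  by_cases htriv : 2 / (r + 1 : ℝ) - ε ≤ 0
  · refine ⟨⟨0, by omega⟩, ⟨0, hnpos⟩, ⟨0, hnpos⟩, SimpleGraph.Walk.nil, by simp, ?_, by simp⟩
    simp only [SimpleGraph.Walk.length_nil, Nat.cast_zero]
    nlinarith
  push Not at htriv
  have hrR : (2 : ℝ) ≤ r := by exact_mod_cast hr
  set g := ⌈γ * n⌉₊ with hgdef
  have hgle : (g : ℝ) ≤ γ * n + 1 := (Nat.ceil_lt_add_one (by positivity)).le
  have hg : ∀ X Y : Finset (Fin n), Disjoint X Y → g ≤ X.card → g ≤ Y.card →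
      ∃ x ∈ X, ∃ y ∈ Y, G.Adj x y := fun X Y h h1 h2 => pr_edge G γ p hp0 hγ1 hG X Y h h1 h2
  let H : Fin r → Fin n → Fin n → Prop := fun i x y => G.Adj x y ∧ col s(x, y) = i
  have hH : ∀ i x y, H i x y → H i y x := by
    rintro i x y ⟨h1, h2⟩
    exact ⟨h1.symm, by rw [Sym2.eq_swap]; exact h2⟩
  obtain ⟨k, hkK, c, hc⟩ := hK (Fin n) H
  have hkR : (k : ℝ) ≤ K := by exact_mod_cast hkK
  have hk0 : (0 : ℝ) ≤ k := Nat.cast_nonneg k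
  have hkk : (k : ℝ) * k ≤ K * K := mul_le_mul hkR hkR hk0 hK0
  rw [Fintype.card_fin] at hc
  have hng := nongood_count D g G.Adj H (fun x y h => ⟨col s(x, y), h, rfl⟩) hg c
  have hng' : ((_ : ℕ) : ℝ) ≤ ((_ : ℕ) : ℝ) := Nat.cast_le.2 hng
  rw [Fintype.card_fin] at hng'
  push_cast at hng'
  set α : ℝ := 2 / (r + 1 : ℝ) with hα
  have hαr : (r + 1 : ℝ) * α = 2 := by rw [hα]; field_simp
  have hα1 : α ≤ 1 := by rw [hα, div_le_one (by linarith)]; linarith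
  have hpos : 0 ≤ (α - ε / 2) * n := mul_nonneg (by linarith) (by linarith)
  set M := ⌊(α - ε / 2) * n⌋₊ with hMdef
  have hM1 : (M : ℝ) ≤ (α - ε / 2) * n := Nat.floor_le hpos
  have hM2 : (α - ε / 2) * n < M + 1 := Nat.lt_floor_add_one _
  have hMn : M ≤ n := by
    have : (M : ℝ) ≤ n := by nlinarith
    exact_mod_cast this
  obtain ⟨i, S, f, hS1, hS2, hS3⟩ := choose_colour (V := Fin n) (by omega : 1 ≤ r)
    (fun i u v => Full (H i) D c (c u) (c v)) (fun i u v h => Full.symm (hH i) h) M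
    (by rw [Fintype.card_fin]; exact hMn) (ε / 4) (by positivity)
    (by
      rw [Fintype.card_fin]
      refine hng'.trans ?_
      have h1 : (k : ℝ) * (2 * g) ≤ K * (2 * (γ * n + 1)) :=
        mul_le_mul hkR (by linarith) (by positivity) hK0
      have h2 : (k : ℝ) * (2 * g) * n ≤ K * (2 * (γ * n + 1)) * n :=
        mul_le_mul_of_nonneg_right h1 (by linarith)
      have h3 : 4 * K * γ * (n * n) ≤ (ε / 4) ^ 2 / 4 * (n * n) :=
        mul_le_mul_of_nonneg_right hγ2 (by positivity)
      have h4 : 4 * (K : ℝ) * n ≤ (ε / 4) ^ 2 / 4 * n * n :=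
        mul_le_mul_of_nonneg_right hn2 (by linarith)
      linarith)
    (by
      rw [Fintype.card_fin]
      have h1 : (r + 1 : ℝ) * M ≤ (r + 1) * ((α - ε / 2) * n) :=
        mul_le_mul_of_nonneg_left hM1 (by linarith)
      have h2 : (r + 1 : ℝ) * ((α - ε / 2) * n) = 2 * n - (r + 1) * (ε / 2 * n) := by
        rw [← hαr]; ring
      have h3 : 0 < ε / 2 * n := by positivity
      have h4 : 2 * (ε / 4) * n = ε / 2 * n := by ring
      nlinarith)
  obtain ⟨Q, q1, q2, q3, q4⟩ := colour_path D g hD4' G.Adj (H i) (hH i) (fun x y h => h.1) hg c S f hS2 hS3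
  have hlen : (α - ε) * n + 1 ≤ Q.length := by
    refine le_trans ?_ q4
    have hSM : (M : ℝ) ≤ S.card := by exact_mod_cast hS1
    have h4D : 4 / (D : ℝ) ≤ 1 := by rw [div_le_one (by linarith)]; linarith
    have h4D0 : 0 ≤ 4 / (D : ℝ) := by positivity
    have h1 : (M : ℝ) * (1 - 4 / D) ≤ S.card * (1 - 4 / D) :=
      mul_le_mul_of_nonneg_right hSM (by linarith)
    have h2 : (M : ℝ) * (4 / D) ≤ n * (ε / 8) :=
      mul_le_mul (by exact_mod_cast hMn) hDε' h4D0 (by linarith)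
    have h3 : (g : ℝ) * (k * k) ≤ (γ * n + 1) * (K * K) :=
      mul_le_mul hgle hkk (by positivity) (by positivity)
    have h5 : 2 * ((K : ℝ) * K) * γ * n ≤ ε / 8 * n := mul_le_mul_of_nonneg_right hγ3 (by linarith)
    have h6 : (M : ℝ) * (1 - 4 / D) = M - M * (4 / D) := by ring
    have h7 : (0 : ℝ) < ε * n := by positivity
    linarith
  have hαn : 0 ≤ (α - ε) * n := mul_nonneg htriv.le (by linarith)
  match Q, q1, q2, q3, hlen with
  | [], _, _, _, hlen => simp at hlen; linarith
  | x :: l, q1, q2, q3, hlen =>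
    obtain ⟨v, w, w1, w2⟩ := list_to_walk G (H i) (fun e => decide (col e ≠ i))
      (fun x y _ h => by
        rintro ⟨_, h2⟩
        simp [h2] at h) l x q1
    refine ⟨i, x, v, w, ?_, ?_, ?_⟩
    · rw [SimpleGraph.Walk.isPath_def, w1]; exact q2
    · have := SimpleGraph.Walk.length_support w
      rw [w1] at this
      rw [this] at hlen
      push_cast at hlen
      linarith
    · exact (w2.trans q3).trans (Nat.mul_le_mul hkK hkK)
end

section
/- Let n, k ≥ 1 be integers, and let F be a bipartite graph with sides X and Y of size n each. Suppose that for every pair of sets X' ⊆ X and Y' ⊆ Y with |X'| = |Y'| = k there is an edge of F between X' and Y'. Then F contains a path of length at least 2n − 4k. -/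
theorem blp_walk {V : Type*} (F : SimpleGraph V) (l : List V) : ∀ a : V,
    (a :: l).IsChain F.Adj → ∃ (v : V) (w : F.Walk a v), w.support = a :: l := by
  induction l with
  | nil => intro a _; exact ⟨a, SimpleGraph.Walk.nil, rfl⟩
  | cons b l ih =>
    intro a h
    rw [List.isChain_cons_cons] at h
    obtain ⟨v, w, hw⟩ := ih b h.2
    exact ⟨v, SimpleGraph.Walk.cons h.1 w, by simp [hw]⟩

theorem blp_balance {V : Type*} [DecidableEq V] (F : SimpleGraph V) (X Y : Finset V)
    (hdisj : Disjoint X Y)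
    (hbip : ∀ u v : V, F.Adj u v → (u ∈ X ∧ v ∈ Y) ∨ (u ∈ Y ∧ v ∈ X))
    (l : List V) : ∀ a : V, (a :: l).IsChain F.Adj → (a :: l).Nodup →
    (a ∈ X → ((a :: l).toFinset ∩ X).card = ((a :: l).toFinset ∩ Y).card ∨
      ((a :: l).toFinset ∩ X).card = ((a :: l).toFinset ∩ Y).card + 1) ∧
    (a ∈ Y → ((a :: l).toFinset ∩ X).card = ((a :: l).toFinset ∩ Y).card ∨
      ((a :: l).toFinset ∩ Y).card = ((a :: l).toFinset ∩ X).card + 1) := by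
  have hd : ∀ a, a ∈ X → a ∉ Y := fun a h h' => Finset.disjoint_left.mp hdisj h h'
  induction l with
  | nil =>
    intro a _ _
    refine ⟨fun h => ?_, fun h => ?_⟩
    · have := hd a h
      simp [h, this]
    · have h2 : a ∉ X := fun h' => hd a h' h
      simp [h, h2]
  | cons b l ih =>
    intro a h hnd
    rw [List.isChain_cons_cons] at h
    rw [List.nodup_cons] at hnd
    have ih := ih b h.2 hnd.2
    have hna : a ∉ (b :: l).toFinset := by simpa using hnd.1
    rw [List.toFinset_cons (a := a)]
    generalize (b :: l).toFinset = P at *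
    have key := hbip a b h.1
    refine ⟨fun h => ?_, fun h => ?_⟩
    · have h2 := hd a h
      have hb : b ∈ Y := by tauto
      rw [Finset.insert_inter_of_mem h, Finset.insert_inter_of_notMem h2,
        Finset.card_insert_of_notMem (by simp [hna])]
      have := ih.2 hb
      omega
    · have h2 : a ∉ X := fun h' => hd a h' h
      have hb : b ∈ X := by tauto
      rw [Finset.insert_inter_of_mem h, Finset.insert_inter_of_notMem h2,
        Finset.card_insert_of_notMem (by simp [hna])]
      have := ih.1 hb
      omega

theorem blp_dfs {V : Type*} [Fintype V] [DecidableEq V] (F : SimpleGraph V) (m : ℕ) :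
    m ≤ Fintype.card V → ∃ (S : Finset V) (p : List V), p.IsChain F.Adj ∧ p.Nodup ∧
      Disjoint S p.toFinset ∧ 2 * S.card + p.length = m ∧
      ∀ s ∈ S, ∀ v, v ∉ S → v ∉ p → ¬ F.Adj s v := by
  induction m with
  | zero => intro _; exact ⟨∅, [], by simp⟩
  | succ m ih =>
    intro hm
    obtain ⟨S, p, hc, hnd, hdis, hcard, hno⟩ := ih (by omega)
    have hT : ∃ t, t ∉ S ∧ t ∉ p := by
      by_contra! hcon
      have h1 : (Finset.univ : Finset V) ⊆ S ∪ p.toFinset := by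
        intro v _
        by_cases hv : v ∈ S
        · simp [hv]
        · simp [hcon v hv]
      have h2 := (Finset.card_le_card h1).trans (Finset.card_union_le _ _)
      have h3 := p.toFinset_card_le
      rw [Finset.card_univ] at h2
      omega
    have push : ∀ t, t ∉ S → t ∉ p → (t :: p).IsChain F.Adj → ∃ (S : Finset V) (p : List V),
        p.IsChain F.Adj ∧ p.Nodup ∧
        Disjoint S p.toFinset ∧ 2 * S.card + p.length = m + 1 ∧
        ∀ s ∈ S, ∀ v, v ∉ S → v ∉ p → ¬ F.Adj s v := by
      intro t h1 h2 h3
      refine ⟨S, t :: p, h3, List.nodup_cons.mpr ⟨h2, hnd⟩, ?_, ?_, ?_⟩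
      · rw [List.toFinset_cons, Finset.disjoint_insert_right]
        exact ⟨h1, hdis⟩
      · simp only [List.length_cons]; omega
      · intro s hs v hv hvp
        exact hno s hs v hv (fun h => hvp (List.mem_cons_of_mem _ h))
    cases p with
    | nil =>
      obtain ⟨t, h1, h2⟩ := hT
      exact push t h1 h2 (by simp)
    | cons u q =>
      by_cases hu : ∃ t, t ∉ S ∧ t ∉ (u :: q) ∧ F.Adj t u
      · obtain ⟨t, h1, h2, h3⟩ := hu
        exact push t h1 h2 (List.isChain_cons_cons.mpr ⟨h3, hc⟩)
      · rw [List.toFinset_cons, Finset.disjoint_insert_right] at hdis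
        rw [List.nodup_cons] at hnd
        refine ⟨insert u S, q, hc.tail, hnd.2, ?_, ?_, ?_⟩
        · rw [Finset.disjoint_insert_left]
          exact ⟨by simpa using hnd.1, hdis.2⟩
        · rw [Finset.card_insert_of_notMem hdis.1]
          simp only [List.length_cons] at hcard
          omega
        · intro s hs v hv hvp hadj
          rw [Finset.mem_insert, not_or] at hv
          have hvq : v ∉ u :: q := by simp [hv.1, hvp]
          rcases Finset.mem_insert.mp hs with rfl | hs
          · exact hu ⟨v, hv.2, hvq, hadj.symm⟩
          · exact hno s hs v hv.2 hvq hadj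

/-- **Lemma (long paths via DFS, Ben-Eliezer–Krivelevich–Sudakov).**
Let `n, k ≥ 1` and let `F` be a bipartite graph with sides `X, Y` of size `n` each,
such that there is an edge between every pair of sets `X' ⊆ X`, `Y' ⊆ Y` with
`|X'| = |Y'| = k`. Then `F` contains a path of length at least `2n − 4k`. -/
theorem bipartite_long_path
    {V : Type*} [Fintype V] [DecidableEq V] (F : SimpleGraph V)
    (X Y : Finset V) (n k : ℕ) (hn : 1 ≤ n) (hk : 1 ≤ k)
    (hX : X.card = n) (hY : Y.card = n)
    (hdisj : Disjoint X Y) (hpart : X ∪ Y = Finset.univ)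
    (hbip : ∀ u v : V, F.Adj u v → (u ∈ X ∧ v ∈ Y) ∨ (u ∈ Y ∧ v ∈ X))
    (hedge : ∀ X' ⊆ X, ∀ Y' ⊆ Y, X'.card = k → Y'.card = k →
      ∃ x ∈ X', ∃ y ∈ Y', F.Adj x y) :
    ∃ (u v : V) (w : F.Walk u v), w.IsPath ∧ (2 * n - 4 * k : ℤ) ≤ (w.length : ℤ) := by
  classical
  have hV : Fintype.card V = 2 * n := by
    rw [← Finset.card_univ, ← hpart, Finset.card_union_of_disjoint hdisj]; omega
  obtain ⟨S, p, hc, hnd, hdis, hcard, hno⟩ := blp_dfs F (Fintype.card V) le_rfl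
  have hlen : p.toFinset.card = p.length := List.toFinset_card_of_nodup hnd
  have split : ∀ P : Finset V, (P ∩ X).card + (P ∩ Y).card = P.card := by
    intro P
    rw [← Finset.card_union_of_disjoint
      (hdisj.mono Finset.inter_subset_right Finset.inter_subset_right),
      ← Finset.inter_union_distrib_left, hpart, Finset.inter_univ]
  set T : Finset V := (S ∪ p.toFinset)ᶜ with hT
  have split3 : ∀ Z : Finset V,
      (S ∩ Z).card + (p.toFinset ∩ Z).card + (T ∩ Z).card = Z.card := by
    intro Z
    rw [← Finset.card_union_of_disjoint
      (hdis.mono Finset.inter_subset_left Finset.inter_subset_left),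
      ← Finset.union_inter_distrib_right, ← Finset.card_union_of_disjoint, 
      ← Finset.union_inter_distrib_right, hT, Finset.union_compl, Finset.univ_inter]
    exact disjoint_compl_right.mono Finset.inter_subset_left Finset.inter_subset_left
  have hnoT : ∀ s ∈ S, ∀ t ∈ T, ¬ F.Adj s t := by
    intro s hs t ht
    simp only [hT, Finset.mem_compl, Finset.mem_union, List.mem_toFinset, not_or] at ht
    exact hno s hs t ht.1 ht.2
  have hA : (S ∩ X).card < k ∨ (T ∩ Y).card < k := by
    by_contra! h
    obtain ⟨A, hA, hA'⟩ := Finset.exists_subset_card_eq h.1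
    obtain ⟨B, hB, hB'⟩ := Finset.exists_subset_card_eq h.2
    obtain ⟨x, hx, y, hy, hxy⟩ := hedge A (hA.trans Finset.inter_subset_right) B
      (hB.trans Finset.inter_subset_right) hA' hB'
    exact hnoT x (Finset.mem_inter.mp (hA hx)).1 y (Finset.mem_inter.mp (hB hy)).1 hxy
  have hB : (T ∩ X).card < k ∨ (S ∩ Y).card < k := by
    by_contra! h
    obtain ⟨A, hA, hA'⟩ := Finset.exists_subset_card_eq h.1
    obtain ⟨B, hB, hB'⟩ := Finset.exists_subset_card_eq h.2
    obtain ⟨x, hx, y, hy, hxy⟩ := hedge A (hA.trans Finset.inter_subset_right) B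
      (hB.trans Finset.inter_subset_right) hA' hB'
    exact hnoT y (Finset.mem_inter.mp (hB hy)).1 x (Finset.mem_inter.mp (hA hx)).1 hxy.symm
  have s1 := split S
  have s2 := split T
  have s3 := split p.toFinset
  have s4 := split3 X
  have s5 := split3 Y
  clear_value T
  cases p with
  | nil =>
    obtain ⟨x, _⟩ := Finset.card_pos.mp (show 0 < X.card by omega)
    refine ⟨x, x, SimpleGraph.Walk.nil, by simp, ?_⟩
    simp at hcard s4 s5
    simp only [SimpleGraph.Walk.length_nil]
    omega
  | cons a l =>
    have bal := blp_balance F X Y hdisj hbip l a hc hnd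
    have ha : a ∈ X ∨ a ∈ Y := by
      rw [← Finset.mem_union, hpart]; exact Finset.mem_univ a
    obtain ⟨v, w, hw⟩ := blp_walk F l a hc
    refine ⟨a, v, w, ?_, ?_⟩
    · rw [SimpleGraph.Walk.isPath_def, hw]; exact hnd
    · have hl := w.length_support
      rw [hw] at hl
      rcases ha with h | h
      · have := bal.1 h
        omega
      · have := bal.2 h
        omega
end
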